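/- arXiv:2105.13692 — 2 statements merged into one kernel-verified Lean document; each statement's English description precedes it below -/
import Mathlib

section
/- Ferrand pushout of affine schemes (pinching case): let φ : A → B be a surjective homomorphism of commutative rings and ψ : B' → B a finite ring homomorphism (B is a finitely generated B'-module), and let A' = A ×_B B' be the fiber product with projections ψ' : A' → A and φ' : A' → B'. Then the commutative square of schemes with vertices Spec B, Spec A, Spec B', Spec A', whose morphisms are Spec(φ) : Spec B → Spec A, Spec(ψ) : Spec B → Spec B', Spec(ψ') : Spec A → Spec A', and Spec(φ') : Spec B' → Spec A', is a pushout square in the category of schemes. -/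
/-! A morphism out of the pushout is constructed Zariski-locally on `Spec A'`.

For an affine target the claim is the universal property of the fiber product of rings. For a
general target `T`, let `f : Spec A ⟶ T` and `g : Spec B' ⟶ T` agree on `Spec B`. The map `A' → B'`
is surjective and `A' → A` is integral, so `Spec A → Spec A'` and `Spec B' → Spec A'` are closed,
and they are jointly surjective (`IsPinchingSquare.jointly_surjective`). Moreover `f` and `g` take
one common value on the points over a given `x : Spec A'`
(`IsPinchingSquare.exists_forall_fiber_eq`). By closedness, every `x` has a basic neighbourhood
`D(r)` over which `f` and `g` both land in a single affine open of `T`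
(`IsPinchingSquare.exists_nhds`).

The hypotheses on the square pass to localizations (`IsPinchingSquare.of_isLocalization`), so over
such a `D(r)` the affine case yields a unique morphism to `T` compatible with `f` and `g`.
Uniqueness on the overlaps `D(r * s)` allows the local morphisms to be glued
(`IsPinchingSquare.existsUnique_desc`). -/

universe u

/-- The fiber product `A ×_B B'` of `φ : A → B` and `ψ : B' → B`, as the subring
`{(a, b') ∈ A × B' : φ a = ψ b'}` of `A × B'`. -/
def fiberProduct {A B B' : Type u} [CommRing A] [CommRing B] [CommRing B']
    (φ : A →+* B) (ψ : B' →+* B) : Subring (A × B') :=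
  RingHom.eqLocus (φ.comp (RingHom.fst A B')) (ψ.comp (RingHom.snd A B'))

/-- The first projection `ψ' : A ×_B B' → A`. -/
def fstProj {A B B' : Type u} [CommRing A] [CommRing B] [CommRing B']
    (φ : A →+* B) (ψ : B' →+* B) : fiberProduct φ ψ →+* A :=
  (RingHom.fst A B').comp (fiberProduct φ ψ).subtype

/-- The second projection `φ' : A ×_B B' → B'`. -/
def sndProj {A B B' : Type u} [CommRing A] [CommRing B] [CommRing B']
    (φ : A →+* B) (ψ : B' →+* B) : fiberProduct φ ψ →+* B' :=
  (RingHom.snd A B').comp (fiberProduct φ ψ).subtype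

/-- The square formed by `p : A' → A`, `q : A' → B'`, `φ : A → B`, `ψ : B' → B` is a fiber product
of commutative rings, with `φ` surjective and `ψ` integral. Integrality of `ψ`, rather than
finiteness, suffices for the pushout property and passes to localizations. -/
structure IsPinchingSquare {A' A B' B : Type u} [CommRing A'] [CommRing A] [CommRing B']
    [CommRing B] (p : A' →+* A) (q : A' →+* B') (φ : A →+* B) (ψ : B' →+* B) : Prop where
  comm : ∀ c, φ (p c) = ψ (q c)
  inj : ∀ c, p c = 0 → q c = 0 → c = 0
  lift : ∀ a b, φ a = ψ b → ∃ c, p c = a ∧ q c = b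
  surj : Function.Surjective φ
  integral : ψ.IsIntegral

theorem isPinchingSquare_fiberProduct {A B B' : Type u} [CommRing A] [CommRing B] [CommRing B']
    (φ : A →+* B) (ψ : B' →+* B) (hφ : Function.Surjective φ) (hψ : ψ.Finite) :
    IsPinchingSquare (fstProj φ ψ) (sndProj φ ψ) φ ψ where
  comm := Subtype.property
  inj _ h₁ h₂ := Subtype.ext (Prod.ext h₁ h₂)
  lift a b h := ⟨⟨(a, b), h⟩, rfl, rfl⟩
  surj := hφ
  integral := hψ.to_isIntegral

/-! ### Prime spectra and localization of pinching squares -/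

namespace IsPinchingSquare

variable {A' A B' B : Type u} [CommRing A'] [CommRing A] [CommRing B'] [CommRing B]
  {p : A' →+* A} {q : A' →+* B'} {φ : A →+* B} {ψ : B' →+* B}

theorem snd_surjective (h : IsPinchingSquare p q φ ψ) : Function.Surjective q := fun b ↦ by
  obtain ⟨a, ha⟩ := h.surj (ψ b)
  obtain ⟨c, -, hc⟩ := h.lift a b ha
  exact ⟨c, hc⟩

/-- A monic equation for `φ a` over `B'` lifts along the surjection `q` to a monic polynomial over
`A'`, whose value at `a` lies in `ker φ`, hence in the image of `p`. -/
theorem fst_isIntegral (h : IsPinchingSquare p q φ ψ) : p.IsIntegral := fun a ↦ by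
  obtain ⟨F, hF, hFa⟩ := h.integral (φ a)
  obtain ⟨G, hG, -, hGm⟩ := Polynomial.lifts_and_natDegree_eq_and_monic
    ((Polynomial.mem_lifts F).2 (Polynomial.map_surjective q h.snd_surjective F)) hF
  -- The factor `X` makes the degree positive.
  have hker : φ ((G * .X).eval₂ p a) = ψ 0 := by
    rw [Polynomial.hom_eval₂, show φ.comp p = ψ.comp q from RingHom.ext h.comm,
      ← Polynomial.eval₂_map, Polynomial.map_mul, hG, Polynomial.eval₂_mul, hFa, zero_mul, map_zero]
  obtain ⟨c, hc, -⟩ := h.lift _ _ hker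
  cases subsingleton_or_nontrivial A'
  · have : Subsingleton A := p.codomain_trivial
    exact ⟨1, Polynomial.monic_one, Subsingleton.elim _ _⟩
  algebraize [p]
  have : IsIntegral A' a := by
    refine IsIntegral.of_aeval_monic (hGm.mul Polynomial.monic_X) ?_ ?_
    · rw [hGm.natDegree_mul Polynomial.monic_X]; simp
    · rw [Polynomial.aeval_def]
      change IsIntegral A' (Polynomial.eval₂ p a _)
      rw [← hc]
      exact isIntegral_algebraMap
  exact this

theorem isClosedMap_comap_fst (h : IsPinchingSquare p q φ ψ) :
    IsClosedMap (PrimeSpectrum.comap p) :=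
  PrimeSpectrum.isClosedMap_comap_of_isIntegral _ h.fst_isIntegral

theorem isClosedMap_comap_snd (h : IsPinchingSquare p q φ ψ) :
    IsClosedMap (PrimeSpectrum.comap q) :=
  PrimeSpectrum.isClosedMap_comap_of_isIntegral _ (q.isIntegral_of_surjective h.snd_surjective)

/-- A prime `x` of `A'` containing `ker q` comes from `Spec B'`. Otherwise `ker p * ker q = 0`
forces `ker p ≤ x`, and lying over applies to the integral map `p`. -/
theorem jointly_surjective (h : IsPinchingSquare p q φ ψ) (x : PrimeSpectrum A') :
    (∃ y, PrimeSpectrum.comap p y = x) ∨ ∃ z, PrimeSpectrum.comap q z = x := by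
  by_cases hx : RingHom.ker q ≤ x.asIdeal
  · right
    have : x ∈ Set.range (PrimeSpectrum.comap q) := by
      rw [range_comap_of_surjective _ _ h.snd_surjective]
      exact hx
    exact this
  · left
    obtain ⟨t, htq, htx⟩ := SetLike.not_le_iff_exists.1 hx
    have hker : RingHom.ker p ≤ x.asIdeal := fun c hc ↦ by
      have : t * c = 0 := h.inj _ (by simp [(RingHom.mem_ker).1 hc])
        (by simp [(RingHom.mem_ker).1 htq])
      exact (x.2.mem_or_mem (this ▸ x.asIdeal.zero_mem)).resolve_left htx
    algebraize [p]
    have : Algebra.IsIntegral A' A := ⟨h.fst_isIntegral⟩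
    obtain ⟨Q, -, hQ, hQx⟩ := Ideal.exists_ideal_over_prime_of_isIntegral x.asIdeal (⊥ : Ideal A)
      (by rwa [← RingHom.ker_eq_comap_bot])
    exact ⟨⟨Q, hQ⟩, PrimeSpectrum.ext hQx⟩

/-- The points of `Spec A` over `V(ker q)` come from `Spec B`, since `p` maps `ker q` onto
`ker φ`. -/
theorem mem_range_of_ker_le (h : IsPinchingSquare p q φ ψ) (y : PrimeSpectrum A)
    (hy : RingHom.ker q ≤ (PrimeSpectrum.comap p y).asIdeal) :
    ∃ w, PrimeSpectrum.comap φ w = y := by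
  have : y ∈ Set.range (PrimeSpectrum.comap φ) := by
    rw [range_comap_of_surjective _ _ h.surj]
    intro a ha
    obtain ⟨c, rfl, hc⟩ := h.lift a 0 (by simpa using ha)
    exact hy hc
  exact this

/-- On points, `Spec A'` is a pushout: functions on `Spec A` and `Spec B'` that agree on `Spec B`
take a single common value on all points over a given `x`. Over `V(ker q) ≅ Spec B'` every point of
`Spec A` comes from `Spec B`; off `V(ker q)` there is exactly one point of `Spec A` over `x` and
none of `Spec B'`. -/
theorem exists_forall_fiber_eq (h : IsPinchingSquare p q φ ψ) {X : Type*} (f : PrimeSpectrum A → X)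
    (g : PrimeSpectrum B' → X)
    (hfg : ∀ w, f (PrimeSpectrum.comap φ w) = g (PrimeSpectrum.comap ψ w))
    (x : PrimeSpectrum A') : ∃ t : X, (∀ y, PrimeSpectrum.comap p y = x → f y = t) ∧
      ∀ z, PrimeSpectrum.comap q z = x → g z = t := by
  by_cases hx : RingHom.ker q ≤ x.asIdeal
  · have hz : x ∈ Set.range (PrimeSpectrum.comap q) := by
      rw [range_comap_of_surjective _ _ h.snd_surjective]
      exact hx
    obtain ⟨z, rfl⟩ := hz
    have hinj := PrimeSpectrum.comap_injective_of_surjective q h.snd_surjective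
    refine ⟨g z, fun y hy ↦ ?_, fun z' hz' ↦ by rw [hinj hz']⟩
    obtain ⟨w, rfl⟩ := h.mem_range_of_ker_le y (by rwa [hy])
    rw [hfg]
    congr 1
    apply hinj
    rw [← hy, ← PrimeSpectrum.comap_comp_apply, ← PrimeSpectrum.comap_comp_apply,
      show φ.comp p = ψ.comp q from RingHom.ext h.comm]
  · obtain ⟨t, htq, htx⟩ := SetLike.not_le_iff_exists.1 hx
    -- For `a : A` the product `p t * a` lies in `ker φ`, so it comes from some `c : A'`, and `a`
    -- belongs to a prime over `x` exactly when `c` belongs to `x`.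
    have key : ∀ y y', PrimeSpectrum.comap p y = x → PrimeSpectrum.comap p y' = x →
        y.asIdeal ≤ y'.asIdeal := by
      intro y y' hy hy' a ha
      obtain ⟨c, hc, -⟩ := h.lift (p t * a) 0 (by simp [h.comm, (RingHom.mem_ker).1 htq])
      have hcx : c ∈ x.asIdeal := by
        rw [← hy, PrimeSpectrum.comap_asIdeal, Ideal.mem_comap, hc]
        exact Ideal.mul_mem_left _ _ ha
      rw [← hy', PrimeSpectrum.comap_asIdeal, Ideal.mem_comap, hc] at hcx
      refine (y'.2.mem_or_mem hcx).resolve_left fun htp ↦ htx ?_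
      rw [← hy']
      exact htp
    have hno : ∀ z, PrimeSpectrum.comap q z ≠ x := by
      rintro z rfl
      exact htx (by simp [PrimeSpectrum.comap_asIdeal, Ideal.mem_comap, (RingHom.mem_ker).1 htq])
    obtain ⟨y₀, hy₀⟩ := (h.jointly_surjective x).resolve_right fun ⟨z, hz⟩ ↦ hno z hz
    refine ⟨f y₀, fun y hy ↦ ?_, fun z hz ↦ (hno z hz).elim⟩
    rw [PrimeSpectrum.ext (le_antisymm (key y y₀ hy hy₀) (key y₀ y hy₀ hy))]

/-- A commuting square of localizations of a pinching square away from the images of one element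
`r` is again a pinching square. -/
theorem of_isLocalization (h : IsPinchingSquare p q φ ψ) (r : A')
    {S S₁ S₂ S₀ : Type u} [CommRing S] [CommRing S₁] [CommRing S₂] [CommRing S₀]
    [Algebra A' S] [Algebra A S₁] [Algebra B' S₂] [Algebra B S₀]
    [IsLocalization.Away r S] [IsLocalization.Away (p r) S₁]
    [IsLocalization.Away (q r) S₂] [IsLocalization.Away (φ (p r)) S₀]
    {p' : S →+* S₁} {q' : S →+* S₂} {φ' : S₁ →+* S₀} {ψ' : S₂ →+* S₀}
    (hp : p'.comp (algebraMap A' S) = (algebraMap A S₁).comp p)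
    (hq : q'.comp (algebraMap A' S) = (algebraMap B' S₂).comp q)
    (hφ : φ'.comp (algebraMap A S₁) = (algebraMap B S₀).comp φ)
    (hψ : ψ'.comp (algebraMap B' S₂) = (algebraMap B S₀).comp ψ) :
    IsPinchingSquare p' q' φ' ψ' := by
  replace hp := fun x ↦ congr($hp x)
  replace hq := fun x ↦ congr($hq x)
  replace hφ := fun x ↦ congr($hφ x)
  replace hψ := fun x ↦ congr($hψ x)
  simp only [RingHom.comp_apply] at hp hq hφ hψ
  have hcomm : φ'.comp p' = ψ'.comp q' := by
    apply IsLocalization.ringHom_ext (Submonoid.powers r)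
    ext c
    simp [hp, hq, hφ, hψ, h.comm]
  have hu := IsLocalization.Away.algebraMap_isUnit (S := S) r
  have hu₀ := IsLocalization.Away.algebraMap_isUnit (S := S₀) (φ (p r))
  have hu₁ := IsLocalization.Away.algebraMap_isUnit (S := S₁) (p r)
  have hu₂ := IsLocalization.Away.algebraMap_isUnit (S := S₂) (q r)
  refine ⟨fun c ↦ congr($hcomm c), fun c h₁ h₂ ↦ ?_, fun a b hab ↦ ?_, fun x ↦ ?_, fun x ↦ ?_⟩
  · obtain ⟨n, c₀, hc⟩ := IsLocalization.Away.surj r c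
    have e₁ : algebraMap A S₁ (p c₀) = algebraMap A S₁ 0 := by rw [← hp, ← hc]; simp [h₁]
    have e₂ : algebraMap B' S₂ (q c₀) = algebraMap B' S₂ 0 := by rw [← hq, ← hc]; simp [h₂]
    obtain ⟨k, hk⟩ := IsLocalization.Away.exists_of_eq (p r) e₁
    obtain ⟨l, hl⟩ := IsLocalization.Away.exists_of_eq (q r) e₂
    have hz : r ^ (k + l) * c₀ = 0 := by
      apply h.inj
      · rw [mul_zero] at hk
        rw [map_mul, map_pow, pow_add, mul_right_comm, hk, zero_mul]
      · rw [mul_zero] at hl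
        rw [map_mul, map_pow, pow_add, mul_assoc, hl, mul_zero]
    have := congr(algebraMap A' S $hz)
    rw [map_mul, map_pow, map_zero, (hu.pow _).mul_right_eq_zero, ← hc,
      (hu.pow _).mul_left_eq_zero] at this
    exact this
  · obtain ⟨n, a₀, ha⟩ := IsLocalization.Away.surj (p r) a
    obtain ⟨m, b₀, hb⟩ := IsLocalization.Away.surj (q r) b
    have e : algebraMap B S₀ (φ (p r ^ m * a₀)) = algebraMap B S₀ (ψ (q r ^ n * b₀)) := by
      rw [← hφ, ← hψ, map_mul (algebraMap A S₁), map_mul (algebraMap B' S₂), ← ha, ← hb]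
      simp only [map_mul, map_pow, hφ, hψ, hab, h.comm]
      ring
    obtain ⟨k, hk⟩ := IsLocalization.Away.exists_of_eq (φ (p r)) e
    obtain ⟨c₀, hc₁, hc₂⟩ := h.lift (p r ^ (k + m) * a₀) (q r ^ (k + n) * b₀) (by
      simp only [map_mul, map_pow, pow_add, mul_assoc] at hk ⊢
      rw [hk, h.comm])
    obtain ⟨c, hc⟩ : ∃ c, c * algebraMap A' S r ^ (k + m + n) = algebraMap A' S c₀ :=
      ⟨algebraMap A' S c₀ * ↑((hu.pow (k + m + n)).unit⁻¹), by simp [mul_assoc]⟩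
    refine ⟨c, ?_, ?_⟩
    · apply (hu₁.pow (k + m + n)).mul_right_cancel
      have := congr(p' $hc)
      rw [map_mul, map_pow, hp, hp, hc₁] at this
      rw [this, map_mul, ← ha, map_pow]; ring
    · apply (hu₂.pow (k + m + n)).mul_right_cancel
      have := congr(q' $hc)
      rw [map_mul, map_pow, hq, hq, hc₂] at this
      rw [this, map_mul, ← hb, map_pow]; ring
  · obtain ⟨n, b, hb⟩ := IsLocalization.Away.surj (φ (p r)) x
    obtain ⟨a, rfl⟩ := h.surj b
    obtain ⟨v, hv⟩ := (hu₁.pow n).exists_left_inv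
    refine ⟨algebraMap A S₁ a * v, ?_⟩
    apply (hu₀.pow n).mul_right_cancel
    rw [hb, ← hφ, ← hφ, ← map_pow, ← map_mul, mul_assoc, hv, mul_one]
  · obtain ⟨n, b, hb⟩ := IsLocalization.Away.surj (φ (p r)) x
    have hbi : ψ'.IsIntegralElem (algebraMap B S₀ b) := by
      obtain ⟨F, hF, hFb⟩ := h.integral b
      refine ⟨F.map (algebraMap B' S₂), hF.map _, ?_⟩
      rw [Polynomial.eval₂_map, show ψ'.comp (algebraMap B' S₂) = (algebraMap B S₀).comp ψ from
        RingHom.ext hψ, ← Polynomial.hom_eval₂, hFb, map_zero]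
    obtain ⟨v, hv⟩ := (hu₂.pow n).exists_left_inv
    have hx : x = algebraMap B S₀ b * ψ' v := by
      apply (hu₀.pow n).mul_right_cancel
      rw [hb, h.comm, ← hψ, mul_assoc, ← map_pow, ← map_mul, hv, map_one, mul_one]
    rw [hx]
    exact hbi.mul _ (ψ'.isIntegralElem_map)


/-! ### Morphisms out of the spectrum of the fiber product -/

open AlgebraicGeometry CategoryTheory Limits

theorem exists_ringHom (h : IsPinchingSquare p q φ ψ) {R : Type u} [CommRing R]
    (f : R →+* A) (g : R →+* B') (hfg : φ.comp f = ψ.comp g) :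
    ∃ k : R →+* A', p.comp k = f ∧ q.comp k = g := by
  have hext : ∀ c d, p c = p d → q c = q d → c = d := fun c d h₁ h₂ ↦
    sub_eq_zero.1 (h.inj _ (by simp [h₁]) (by simp [h₂]))
  choose k hk₁ hk₂ using fun x ↦ h.lift (f x) (g x) congr($hfg x)
  exact ⟨
    { toFun := k
      map_one' := hext _ _ (by simp [hk₁]) (by simp [hk₂])
      map_mul' := fun x y ↦ hext _ _ (by simp [hk₁]) (by simp [hk₂])
      map_zero' := hext _ _ (by simp [hk₁]) (by simp [hk₂])
      map_add' := fun x y ↦ hext _ _ (by simp [hk₁]) (by simp [hk₂]) },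
    RingHom.ext hk₁, RingHom.ext hk₂⟩

theorem ringHom_ext (h : IsPinchingSquare p q φ ψ) {R : Type u} [CommRing R]
    {k k' : R →+* A'} (h₁ : p.comp k = p.comp k') (h₂ : q.comp k = q.comp k') : k = k' := by
  ext x
  refine sub_eq_zero.1 (h.inj _ ?_ ?_)
  · simpa [sub_eq_zero] using congr($h₁ x)
  · simpa [sub_eq_zero] using congr($h₂ x)

theorem specMap_comm (h : IsPinchingSquare p q φ ψ) :
    Spec.map (CommRingCat.ofHom φ) ≫ Spec.map (CommRingCat.ofHom p) =
      Spec.map (CommRingCat.ofHom ψ) ≫ Spec.map (CommRingCat.ofHom q) := by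
  rw [← Spec.map_comp, ← Spec.map_comp, ← CommRingCat.ofHom_comp, ← CommRingCat.ofHom_comp,
    show φ.comp p = ψ.comp q from RingHom.ext h.comm]

/-- Affine targets: the pushout property is the fiber product property of the rings. -/
theorem exists_of_isAffine (h : IsPinchingSquare p q φ ψ) {T : Scheme.{u}} [IsAffine T]
    (f : Spec (.of A) ⟶ T) (g : Spec (.of B') ⟶ T)
    (hfg : Spec.map (CommRingCat.ofHom φ) ≫ f = Spec.map (CommRingCat.ofHom ψ) ≫ g) :
    ∃ k : Spec (.of A') ⟶ T, Spec.map (CommRingCat.ofHom p) ≫ k = f ∧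
      Spec.map (CommRingCat.ofHom q) ≫ k = g := by
  obtain ⟨f', hf⟩ := Spec.map_surjective (f ≫ T.isoSpec.hom)
  obtain ⟨g', hg⟩ := Spec.map_surjective (g ≫ T.isoSpec.hom)
  obtain ⟨k, hk₁, hk₂⟩ := h.exists_ringHom f'.hom g'.hom (by
    have : f' ≫ CommRingCat.ofHom φ = g' ≫ CommRingCat.ofHom ψ := by
      apply Spec.map_injective
      rw [Spec.map_comp, Spec.map_comp, hf, hg, reassoc_of% hfg]
    exact congr(($this).hom))
  refine ⟨Spec.map (CommRingCat.ofHom k) ≫ T.isoSpec.inv, ?_, ?_⟩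
  · rw [← Category.assoc, Iso.comp_inv_eq, ← hf, ← Spec.map_comp, ← CommRingCat.ofHom_comp, hk₁]
    rfl
  · rw [← Category.assoc, Iso.comp_inv_eq, ← hg, ← Spec.map_comp, ← CommRingCat.ofHom_comp, hk₂]
    rfl

theorem hom_ext_of_isAffine (h : IsPinchingSquare p q φ ψ) {T : Scheme.{u}} [IsAffine T]
    {k k' : Spec (.of A') ⟶ T}
    (h₁ : Spec.map (CommRingCat.ofHom p) ≫ k = Spec.map (CommRingCat.ofHom p) ≫ k')
    (h₂ : Spec.map (CommRingCat.ofHom q) ≫ k = Spec.map (CommRingCat.ofHom q) ≫ k') : k = k' := by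
  rw [← cancel_mono T.isoSpec.hom]
  obtain ⟨f, hf⟩ := Spec.map_surjective (k ≫ T.isoSpec.hom)
  obtain ⟨g, hg⟩ := Spec.map_surjective (k' ≫ T.isoSpec.hom)
  rw [← hf, ← hg]
  congr 1
  apply CommRingCat.hom_ext
  apply h.ringHom_ext
  · have : f ≫ CommRingCat.ofHom p = g ≫ CommRingCat.ofHom p := by
      apply Spec.map_injective
      rw [Spec.map_comp, Spec.map_comp, hf, hg, reassoc_of% h₁]
    exact congr(($this).hom)
  · have : f ≫ CommRingCat.ofHom q = g ≫ CommRingCat.ofHom q := by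
      apply Spec.map_injective
      rw [Spec.map_comp, Spec.map_comp, hf, hg, reassoc_of% h₂]
    exact congr(($this).hom)

theorem exists_of_range_subset (h : IsPinchingSquare p q φ ψ) {T : Scheme.{u}} {U : T.Opens}
    (hU : IsAffineOpen U) (f : Spec (.of A) ⟶ T) (g : Spec (.of B') ⟶ T)
    (hf : ∀ y, f y ∈ U) (hg : ∀ z, g z ∈ U)
    (hfg : Spec.map (CommRingCat.ofHom φ) ≫ f = Spec.map (CommRingCat.ofHom ψ) ≫ g) :
    ∃ k : Spec (.of A') ⟶ T, Spec.map (CommRingCat.ofHom p) ≫ k = f ∧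
      Spec.map (CommRingCat.ofHom q) ≫ k = g := by
  have : IsAffine U := hU
  have hf' : Set.range f ⊆ Set.range U.ι := by
    rw [Scheme.Opens.range_ι]; rintro _ ⟨y, rfl⟩; exact hf y
  have hg' : Set.range g ⊆ Set.range U.ι := by
    rw [Scheme.Opens.range_ι]; rintro _ ⟨y, rfl⟩; exact hg y
  obtain ⟨k, hk₁, hk₂⟩ := h.exists_of_isAffine (IsOpenImmersion.lift U.ι f hf')
    (IsOpenImmersion.lift U.ι g hg') (by
      rw [← cancel_mono U.ι]
      simpa using hfg)
  exact ⟨k ≫ U.ι, by rw [reassoc_of% hk₁, IsOpenImmersion.lift_fac],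
    by rw [reassoc_of% hk₂, IsOpenImmersion.lift_fac]⟩

/-- A morphism out of `Spec A'` whose restrictions to `Spec A` and `Spec B'` land in `U` lands in
`U` itself, by joint surjectivity, so uniqueness reduces to the affine target `U`. -/
theorem hom_ext_of_range_subset (h : IsPinchingSquare p q φ ψ) {T : Scheme.{u}} {U : T.Opens}
    (hU : IsAffineOpen U) {f : Spec (.of A) ⟶ T} {g : Spec (.of B') ⟶ T}
    (hf : ∀ y, f y ∈ U) (hg : ∀ z, g z ∈ U) {k k' : Spec (.of A') ⟶ T}
    (h₁ : Spec.map (CommRingCat.ofHom p) ≫ k = f) (h₁' : Spec.map (CommRingCat.ofHom p) ≫ k' = f)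
    (h₂ : Spec.map (CommRingCat.ofHom q) ≫ k = g)
    (h₂' : Spec.map (CommRingCat.ofHom q) ≫ k' = g) : k = k' := by
  have : IsAffine U := hU
  have key : ∀ l : Spec (.of A') ⟶ T, Spec.map (CommRingCat.ofHom p) ≫ l = f →
      Spec.map (CommRingCat.ofHom q) ≫ l = g → Set.range l ⊆ Set.range U.ι := by
    rintro l rfl rfl _ ⟨x, rfl⟩
    rw [Scheme.Opens.range_ι]
    obtain ⟨y, rfl⟩ | ⟨z, rfl⟩ := h.jointly_surjective x
    · exact hf y
    · exact hg z
  have hk := IsOpenImmersion.lift_fac U.ι k (key k h₁ h₂)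
  have hk' := IsOpenImmersion.lift_fac U.ι k' (key k' h₁' h₂')
  rw [← hk, ← hk']
  congr 1
  apply h.hom_ext_of_isAffine <;> rw [← cancel_mono U.ι, Category.assoc, Category.assoc, hk, hk']
  · rw [h₁, h₁']
  · rw [h₂, h₂']


/-- For `k : Y ⟶ Spec A'`, the morphism `l : Y ⟶ T` is a descent of `(f, g)` over `Y`: it agrees
with `f` on `Y ×_{Spec A'} Spec A` and with `g` on `Y ×_{Spec A'} Spec B'`. The agreement is
expressed on all test schemes `V` mapping to these fiber products, which makes stability under
restriction along `Z ⟶ Y` immediate. -/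
structure IsDescent (p : A' →+* A) (q : A' →+* B') {T : Scheme.{u}}
    (f : Spec (.of A) ⟶ T) (g : Spec (.of B') ⟶ T) {Y : Scheme.{u}}
    (k : Y ⟶ Spec (.of A')) (l : Y ⟶ T) : Prop where
  fst : ∀ {V : Scheme.{u}} (v : V ⟶ Y) (w : V ⟶ Spec (.of A)),
    v ≫ k = w ≫ Spec.map (CommRingCat.ofHom p) → v ≫ l = w ≫ f
  snd : ∀ {V : Scheme.{u}} (v : V ⟶ Y) (w : V ⟶ Spec (.of B')),
    v ≫ k = w ≫ Spec.map (CommRingCat.ofHom q) → v ≫ l = w ≫ g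

theorem IsDescent.comp {T : Scheme.{u}} {f : Spec (.of A) ⟶ T} {g : Spec (.of B') ⟶ T}
    {Y : Scheme.{u}} {k : Y ⟶ Spec (.of A')} {l : Y ⟶ T} (hl : IsDescent p q f g k l)
    {Z : Scheme.{u}} (m : Z ⟶ Y) : IsDescent p q f g (m ≫ k) (m ≫ l) where
  fst v w hvw := by
    rw [← Category.assoc]
    exact hl.fst (v ≫ m) w (by rw [Category.assoc, hvw])
  snd v w hvw := by
    rw [← Category.assoc]
    exact hl.snd (v ≫ m) w (by rw [Category.assoc, hvw])

/-- Localizing a pinching square away from `r : A'` gives a pinching square. The lower right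
corner is left unspecified; `j` is the localization map into it. -/
theorem exists_localization (h : IsPinchingSquare p q φ ψ) (r : A') (S : Type u) [CommRing S]
    [Algebra A' S] [IsLocalization.Away r S] :
    ∃ (S₀ : Type u) (_ : CommRing S₀)
      (p' : S →+* Localization.Away (p r)) (q' : S →+* Localization.Away (q r))
      (φ' : Localization.Away (p r) →+* S₀) (ψ' : Localization.Away (q r) →+* S₀)
      (j : B →+* S₀),
      IsPinchingSquare p' q' φ' ψ' ∧
      p'.comp (algebraMap A' S) = (algebraMap A _).comp p ∧
      q'.comp (algebraMap A' S) = (algebraMap B' _).comp q ∧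
      φ'.comp (algebraMap A _) = j.comp φ ∧ ψ'.comp (algebraMap B' _) = j.comp ψ := by
  have : IsLocalization.Away (ψ (q r)) (Localization.Away (φ (p r))) := by
    rw [← h.comm]; infer_instance
  have hp : (IsLocalization.Away.map S (Localization.Away (p r)) p r).comp (algebraMap A' S) =
      (algebraMap A _).comp p := IsLocalization.map_comp _
  have hq : (IsLocalization.Away.map S (Localization.Away (q r)) q r).comp (algebraMap A' S) =
      (algebraMap B' _).comp q := IsLocalization.map_comp _
  have hφ : (IsLocalization.Away.map (Localization.Away (p r)) (Localization.Away (φ (p r)))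
      φ (p r)).comp (algebraMap A _) = (algebraMap B _).comp φ := IsLocalization.map_comp _
  have hψ : (IsLocalization.Away.map (Localization.Away (q r)) (Localization.Away (φ (p r)))
      ψ (q r)).comp (algebraMap B' _) = (algebraMap B _).comp ψ := IsLocalization.map_comp _
  exact ⟨_, _, _, _, _, _, _, h.of_isLocalization r hp hq hφ hψ, hp, hq, hφ, hψ⟩

theorem specMap_comp_eq {R₁ R₂ R₃ R₄ : Type u} [CommRing R₁] [CommRing R₂] [CommRing R₃]
    [CommRing R₄] {a : R₁ →+* R₂} {b : R₂ →+* R₄} {c : R₁ →+* R₃} {d : R₃ →+* R₄}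
    (e : b.comp a = d.comp c) :
    Spec.map (CommRingCat.ofHom b) ≫ Spec.map (CommRingCat.ofHom a) =
      Spec.map (CommRingCat.ofHom d) ≫ Spec.map (CommRingCat.ofHom c) := by
  rw [← Spec.map_comp, ← Spec.map_comp, ← CommRingCat.ofHom_comp, ← CommRingCat.ofHom_comp, e]

/-- For `p : R' → R`, the open subscheme `D(p r)` of `Spec R` is the fiber product of `Spec R` and
`D(r) = Spec S` over `Spec R'`: compatible morphisms into these two lift to `D(p r)`. -/
theorem exists_lift_localization {R R' : Type u} [CommRing R] [CommRing R'] (p : R' →+* R)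
    (r : R') (S : Type u) [CommRing S] [Algebra R' S] [IsLocalization.Away r S]
    (p' : S →+* Localization.Away (p r))
    (hp : p'.comp (algebraMap R' S) = (algebraMap R _).comp p) {V : Scheme.{u}}
    (v : V ⟶ Spec (.of S)) (w : V ⟶ Spec (.of R))
    (hvw : v ≫ Spec.map (CommRingCat.ofHom (algebraMap R' S)) =
      w ≫ Spec.map (CommRingCat.ofHom p)) :
    ∃ u : V ⟶ Spec (.of (Localization.Away (p r))),
      u ≫ Spec.map (CommRingCat.ofHom (algebraMap R _)) = w ∧
      u ≫ Spec.map (CommRingCat.ofHom p') = v := by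
  have : IsOpenImmersion (Spec.map (CommRingCat.ofHom (algebraMap R' S))) :=
    IsOpenImmersion.of_isLocalization r
  have : IsOpenImmersion
      (Spec.map (CommRingCat.ofHom (algebraMap R (Localization.Away (p r))))) :=
    IsOpenImmersion.of_isLocalization (p r)
  have hr : Set.range w ⊆
      Set.range (Spec.map (CommRingCat.ofHom (algebraMap R (Localization.Away (p r))))) := by
    have h₁ : Set.range (Spec.map (CommRingCat.ofHom (algebraMap R (Localization.Away (p r))))) =
        (PrimeSpectrum.basicOpen (p r) : Set (PrimeSpectrum R)) :=
      PrimeSpectrum.localization_away_comap_range _ (p r)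
    rw [h₁]
    rintro _ ⟨x, rfl⟩
    have h₂ : Spec.map (CommRingCat.ofHom (algebraMap R' S)) (v x) ∈
        (PrimeSpectrum.basicOpen r : Set (PrimeSpectrum R')) := by
      rw [← PrimeSpectrum.localization_away_comap_range S r]
      exact ⟨v x, rfl⟩
    rw [← Scheme.Hom.comp_apply, hvw, Scheme.Hom.comp_apply] at h₂
    exact h₂
  refine ⟨IsOpenImmersion.lift _ w hr, IsOpenImmersion.lift_fac _ _ _, ?_⟩
  rw [← cancel_mono (Spec.map (CommRingCat.ofHom (algebraMap R' S))), Category.assoc,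
    specMap_comp_eq hp, IsOpenImmersion.lift_fac_assoc, hvw]

theorem mem_of_localization {R : Type u} [CommRing R] (s : R) {T : Scheme.{u}} {U : T.Opens}
    (f : Spec (.of R) ⟶ T) (hf : ∀ y : PrimeSpectrum R, s ∉ y.asIdeal → f y ∈ U)
    (y : Spec (.of (Localization.Away s))) :
    (Spec.map (CommRingCat.ofHom (algebraMap R (Localization.Away s))) ≫ f) y ∈ U := by
  rw [Scheme.Hom.comp_apply]
  apply hf
  have : PrimeSpectrum.comap (algebraMap R (Localization.Away s)) y ∈
      (PrimeSpectrum.basicOpen s : Set (PrimeSpectrum R)) := by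
    rw [← PrimeSpectrum.localization_away_comap_range (Localization.Away s) s]
    exact ⟨y, rfl⟩
  exact this

/-- Local existence: if `f` and `g` send the preimages of `D(r)` into one affine open `U`, then a
descent of `(f, g)` exists over `D(r) = Spec S`. -/
theorem exists_isDescent (h : IsPinchingSquare p q φ ψ) {T : Scheme.{u}} {U : T.Opens}
    (hU : IsAffineOpen U) {f : Spec (.of A) ⟶ T} {g : Spec (.of B') ⟶ T}
    (hfg : Spec.map (CommRingCat.ofHom φ) ≫ f = Spec.map (CommRingCat.ofHom ψ) ≫ g) (r : A')
    (hf : ∀ y : PrimeSpectrum A, p r ∉ y.asIdeal → f y ∈ U)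
    (hg : ∀ z : PrimeSpectrum B', q r ∉ z.asIdeal → g z ∈ U)
    (S : Type u) [CommRing S] [Algebra A' S] [IsLocalization.Away r S] :
    ∃ l : Spec (.of S) ⟶ T,
      IsDescent p q f g (Spec.map (CommRingCat.ofHom (algebraMap A' S))) l := by
  obtain ⟨S₀, _, p', q', φ', ψ', j, h', hp, hq, hφ, hψ⟩ := h.exists_localization r S
  obtain ⟨l, hl₁, hl₂⟩ := h'.exists_of_range_subset hU
    (Spec.map (CommRingCat.ofHom (algebraMap A _)) ≫ f)
    (Spec.map (CommRingCat.ofHom (algebraMap B' _)) ≫ g)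
    (mem_of_localization _ f hf) (mem_of_localization _ g hg) (by
      rw [← Category.assoc, specMap_comp_eq hφ, ← Category.assoc, specMap_comp_eq hψ,
        Category.assoc, hfg, Category.assoc])
  refine ⟨l, fun v w hvw ↦ ?_, fun v w hvw ↦ ?_⟩
  · obtain ⟨u, rfl, rfl⟩ := exists_lift_localization p r S p' hp v w hvw
    rw [Category.assoc, hl₁, Category.assoc]
  · obtain ⟨u, rfl, rfl⟩ := exists_lift_localization q r S q' hq v w hvw
    rw [Category.assoc, hl₂, Category.assoc]

/-- Local uniqueness: if `f` and `g` send the preimages of `D(r)` into one affine open `U`, then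
there is at most one descent of `(f, g)` over `D(r) = Spec S`. -/
theorem isDescent_unique (h : IsPinchingSquare p q φ ψ) {T : Scheme.{u}} {U : T.Opens}
    (hU : IsAffineOpen U) {f : Spec (.of A) ⟶ T} {g : Spec (.of B') ⟶ T} (r : A')
    (hf : ∀ y : PrimeSpectrum A, p r ∉ y.asIdeal → f y ∈ U)
    (hg : ∀ z : PrimeSpectrum B', q r ∉ z.asIdeal → g z ∈ U)
    (S : Type u) [CommRing S] [Algebra A' S] [IsLocalization.Away r S]
    {l l' : Spec (.of S) ⟶ T}
    (hl : IsDescent p q f g (Spec.map (CommRingCat.ofHom (algebraMap A' S))) l)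
    (hl' : IsDescent p q f g (Spec.map (CommRingCat.ofHom (algebraMap A' S))) l') : l = l' := by
  obtain ⟨S₀, _, p', q', φ', ψ', j, h', hp, hq, hφ, hψ⟩ := h.exists_localization r S
  exact h'.hom_ext_of_range_subset hU (mem_of_localization _ f hf) (mem_of_localization _ g hg)
    (hl.fst _ _ (specMap_comp_eq hp)) (hl'.fst _ _ (specMap_comp_eq hp))
    (hl.snd _ _ (specMap_comp_eq hq)) (hl'.snd _ _ (specMap_comp_eq hq))

/-- Each point `x` of `Spec A'` has a basic open neighbourhood `D(r)` whose preimages in `Spec A`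
and `Spec B'` are sent by `f` and `g` into one affine open `U`. Indeed `f` and `g` take a single
value on the fibers over `x`, and both maps to `Spec A'` are closed. -/
theorem exists_nhds (h : IsPinchingSquare p q φ ψ) {T : Scheme.{u}}
    {f : Spec (.of A) ⟶ T} {g : Spec (.of B') ⟶ T}
    (hfg : Spec.map (CommRingCat.ofHom φ) ≫ f = Spec.map (CommRingCat.ofHom ψ) ≫ g)
    (x : PrimeSpectrum A') : ∃ r : A', r ∉ x.asIdeal ∧ ∃ U : T.Opens, IsAffineOpen U ∧
      (∀ y : PrimeSpectrum A, p r ∉ y.asIdeal → f y ∈ U) ∧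
      ∀ z : PrimeSpectrum B', q r ∉ z.asIdeal → g z ∈ U := by
  obtain ⟨t, ht₁, ht₂⟩ := h.exists_forall_fiber_eq (fun y ↦ f y) (fun z ↦ g z)
    (fun w ↦ congr($hfg w)) x
  obtain ⟨U, hU, htU, -⟩ := T.isBasis_affineOpens.exists_subset_of_mem_open
    (Set.mem_univ t) isOpen_univ
  obtain ⟨U, hU, rfl⟩ := hU
  have hc₁ : IsClosed (PrimeSpectrum.comap p '' (f ⁻¹ᵁ U : Set (Spec (.of A)))ᶜ) :=
    h.isClosedMap_comap_fst _ (f ⁻¹ᵁ U).isOpen.isClosed_compl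
  have hc₂ : IsClosed (PrimeSpectrum.comap q '' (g ⁻¹ᵁ U : Set (Spec (.of B')))ᶜ) :=
    h.isClosedMap_comap_snd _ (g ⁻¹ᵁ U).isOpen.isClosed_compl
  obtain ⟨_, ⟨r, rfl⟩, hxr, hr⟩ :=
    PrimeSpectrum.isTopologicalBasis_basic_opens.exists_subset_of_mem_open
      (show x ∈ (PrimeSpectrum.comap p '' (f ⁻¹ᵁ U : Set (Spec (.of A)))ᶜ ∪
        PrimeSpectrum.comap q '' (g ⁻¹ᵁ U : Set (Spec (.of B')))ᶜ)ᶜ by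
        rintro (⟨y, hy, hyx⟩ | ⟨z, hz, hzx⟩)
        · exact hy (show f y ∈ U from ht₁ y hyx ▸ htU)
        · exact hz (show g z ∈ U from ht₂ z hzx ▸ htU))
      (hc₁.union hc₂).isOpen_compl
  refine ⟨r, hxr, U, hU, fun y hy ↦ ?_, fun z hz ↦ ?_⟩
  · by_contra hyU
    exact hr (show PrimeSpectrum.comap p y ∈ _ from hy) (Or.inl ⟨y, hyU, rfl⟩)
  · by_contra hzU
    exact hr (show PrimeSpectrum.comap q z ∈ _ from hz) (Or.inr ⟨z, hzU, rfl⟩)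

/-- The universal property of the pushout, by gluing local descents along a cover by basic opens. -/
theorem existsUnique_desc (h : IsPinchingSquare p q φ ψ) {T : Scheme.{u}}
    {f : Spec (.of A) ⟶ T} {g : Spec (.of B') ⟶ T}
    (hfg : Spec.map (CommRingCat.ofHom φ) ≫ f = Spec.map (CommRingCat.ofHom ψ) ≫ g) :
    ∃! l : Spec (.of A') ⟶ T, Spec.map (CommRingCat.ofHom p) ≫ l = f ∧
      Spec.map (CommRingCat.ofHom q) ≫ l = g := by
  choose s hs U hU hf hg using h.exists_nhds hfg
  have hspan : Ideal.span (Set.range s) = ⊤ := by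
    by_contra hne
    obtain ⟨M, hM, hle⟩ := Ideal.exists_le_maximal _ hne
    exact hs ⟨M, hM.isPrime⟩ (hle (Ideal.subset_span ⟨_, rfl⟩))
  let 𝒰 : (Spec (.of A')).OpenCover :=
    (Scheme.affineOpenCoverOfSpanRangeEqTop (R := .of A') s hspan).openCover
  choose l hl using fun x ↦
    h.exists_isDescent (hU x) hfg (s x) (hf x) (hg x) (Localization.Away (s x))
  have hglue : ∀ x y, pullback.fst (𝒰.f x) (𝒰.f y) ≫ l x = pullback.snd _ _ ≫ l y := by
    intro x y
    -- The overlap of `D(s x)` and `D(s y)` is `D(s x * s y)`, where descents are unique.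
    let e := pullbackSpecIso A' (Localization.Away (s x)) (Localization.Away (s y))
    have : IsLocalization.Away (s x * s y)
        (TensorProduct A' (Localization.Away (s x)) (Localization.Away (s y))) :=
      IsLocalization.Away.mul' (Localization.Away (s x)) _ _ _
    have e₁ := (hl x).comp (e.inv ≫ pullback.fst _ _)
    have e₂ := (hl y).comp (e.inv ≫ pullback.snd _ _)
    rw [Category.assoc, ← pullback.condition] at e₂
    rw [Category.assoc] at e₁
    have e₃ : e.inv ≫ pullback.fst _ _ ≫
        Spec.map (CommRingCat.ofHom (algebraMap A' (Localization.Away (s x)))) =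
        Spec.map (CommRingCat.ofHom (algebraMap A' _)) := by
      rw [Iso.inv_comp_eq]
      exact (pullbackSpecIso_hom_base ..).symm
    rw [e₃] at e₁ e₂
    have := h.isDescent_unique (hU x) (s x * s y)
      (fun z hz ↦ hf x z fun hz' ↦ hz (by rw [map_mul]; exact Ideal.mul_mem_right _ _ hz'))
      (fun z hz ↦ hg x z fun hz' ↦ hz (by rw [map_mul]; exact Ideal.mul_mem_right _ _ hz'))
      _ e₁ e₂
    rw [Category.assoc, Category.assoc, cancel_epi] at this
    exact this
  have hι : ∀ x, 𝒰.f x ≫ 𝒰.glueMorphisms l hglue = l x := 𝒰.ι_glueMorphisms l hglue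
  refine ⟨𝒰.glueMorphisms l hglue, ⟨?_, ?_⟩, ?_⟩
  · have hx (x : 𝒰.I₀) : pullback.fst (Spec.map (CommRingCat.ofHom p)) (𝒰.f x) ≫
        Spec.map (CommRingCat.ofHom p) ≫ 𝒰.glueMorphisms l hglue = pullback.fst _ _ ≫ f := by
      rw [pullback.condition_assoc, hι]
      exact (hl x).fst _ _ pullback.condition.symm
    exact Scheme.Cover.hom_ext (𝒰.pullback₁ (Spec.map (CommRingCat.ofHom p))) _ _ hx
  · have hx (x : 𝒰.I₀) : pullback.fst (Spec.map (CommRingCat.ofHom q)) (𝒰.f x) ≫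
        Spec.map (CommRingCat.ofHom q) ≫ 𝒰.glueMorphisms l hglue = pullback.fst _ _ ≫ g := by
      rw [pullback.condition_assoc, hι]
      exact (hl x).snd _ _ pullback.condition.symm
    exact Scheme.Cover.hom_ext (𝒰.pullback₁ (Spec.map (CommRingCat.ofHom q))) _ _ hx
  · rintro m ⟨hm₁, hm₂⟩
    refine Scheme.Cover.hom_ext 𝒰 _ _ fun x ↦ ?_
    rw [hι]
    have hm : IsDescent p q f g (𝟙 _) m :=
      ⟨fun v w hvw ↦ by rw [← hm₁, ← reassoc_of% hvw],
        fun v w hvw ↦ by rw [← hm₂, ← reassoc_of% hvw]⟩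
    refine h.isDescent_unique (hU x) (s x) (hf x) (hg x) _ ?_ (hl x)
    have := hm.comp (𝒰.f x)
    rw [Category.comp_id] at this
    exact this

end IsPinchingSquare

open AlgebraicGeometry CategoryTheory in
/-- Ferrand pushout of affine schemes (pinching case): if `φ : A → B` is surjective and
`ψ : B' → B` is finite, then the square of schemes
`Spec B → Spec A`, `Spec B → Spec B'`, `Spec A → Spec A'`, `Spec B' → Spec A'`,
where `A' = A ×_B B'`, is a pushout square in the category of schemes. -/
theorem spec_fiberProduct_isPushout {A B B' : Type u} [CommRing A] [CommRing B] [CommRing B']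
    (φ : A →+* B) (ψ : B' →+* B) (hφ : Function.Surjective φ) (hψ : ψ.Finite) :
    IsPushout
      (Spec.map (CommRingCat.ofHom φ))
      (Spec.map (CommRingCat.ofHom ψ))
      (Spec.map (CommRingCat.ofHom (fstProj φ ψ)))
      (Spec.map (CommRingCat.ofHom (sndProj φ ψ))) := by
  have h := isPinchingSquare_fiberProduct φ ψ hφ hψ
  refine ⟨⟨h.specMap_comm⟩, ⟨Limits.PushoutCocone.IsColimit.mk _
    (fun c ↦ (h.existsUnique_desc c.condition).choose)
    (fun c ↦ (h.existsUnique_desc c.condition).choose_spec.1.1)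
    (fun c ↦ (h.existsUnique_desc c.condition).choose_spec.1.2)
    fun c m hm₁ hm₂ ↦ (h.existsUnique_desc c.condition).choose_spec.2 m ⟨hm₁, hm₂⟩⟩⟩
end

section
/- Let φ : A → B be a surjective homomorphism of commutative rings, ψ : B' → B a finite ring homomorphism, and A' = A ×_B B' the fiber product with projections ψ' : A' → A and φ' : A' → B'. Then the commutative square of schemes with morphisms Spec(φ) : Spec B → Spec A, Spec(ψ) : Spec B → Spec B', Spec(ψ') : Spec A → Spec A', and Spec(φ') : Spec B' → Spec A' is a pullback square in the category of schemes; that is, Spec B is the fiber product Spec A ×_{Spec A'} Spec B'. -/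
/-!
`Spec` turns pushouts of commutative rings into pullbacks of schemes, so it suffices that `B` is
the pushout of `A` and `B'` over `A' = A ×_B B'`. Let `f : A → C` and `g : B' → C` agree on `A'`.
If `φ a = 0` then `(a, 0) ∈ A'`, so `f a = g 0 = 0`; as `φ` is surjective, `f` factors uniquely
as `h ∘ φ`. Given `b'`, choose `a` with `φ a = ψ b'`; then `(a, b') ∈ A'`, so
`g b' = f a = h (φ a) = h (ψ b')`.
-/

universe u

open CategoryTheory in
theorem fiberProduct_isPushout {A B B' : Type u} [CommRing A] [CommRing B] [CommRing B']
    (φ : A →+* B) (ψ : B' →+* B) (hφ : Function.Surjective φ) :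
    IsPushout
      (CommRingCat.ofHom (fstProj φ ψ))
      (CommRingCat.ofHom (sndProj φ ψ))
      (CommRingCat.ofHom φ)
      (CommRingCat.ofHom ψ) := by
  have agree {C : CommRingCat.{u}} (f : CommRingCat.of A ⟶ C) (g : CommRingCat.of B' ⟶ C)
      (w : CommRingCat.ofHom (fstProj φ ψ) ≫ f = CommRingCat.ofHom (sndProj φ ψ) ≫ g)
      (a : A) (b' : B') (h : φ a = ψ b') : f.hom a = g.hom b' :=
    congr($(w).hom ⟨(a, b'), h⟩)
  have ker_le {C : CommRingCat.{u}} (f : CommRingCat.of A ⟶ C) (g : CommRingCat.of B' ⟶ C)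
      (w : CommRingCat.ofHom (fstProj φ ψ) ≫ f = CommRingCat.ofHom (sndProj φ ψ) ≫ g) :
      RingHom.ker φ ≤ RingHom.ker f.hom := fun a ha => by
    have ha' : φ a = 0 := ha
    simpa using agree f g w a 0 (by simpa using ha')
  have lift_apply {C : CommRingCat.{u}} (f : CommRingCat.of A ⟶ C)
      (hf : RingHom.ker φ ≤ RingHom.ker f.hom) (a : A) :
      φ.liftOfSurjective hφ ⟨f.hom, hf⟩ (φ a) = f.hom a :=
    φ.liftOfRightInverse_comp_apply _ _ ⟨f.hom, hf⟩ a
  refine ⟨⟨?_⟩, ⟨Limits.PushoutCocone.IsColimit.mk _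
    (fun s => CommRingCat.ofHom
      (φ.liftOfSurjective hφ ⟨s.inl.hom, ker_le s.inl s.inr s.condition⟩)) ?_ ?_ ?_⟩⟩
  · ext x
    exact x.2
  · intro s
    ext a
    exact lift_apply s.inl _ a
  · intro s
    ext b'
    obtain ⟨a, ha⟩ := hφ (ψ b')
    change φ.liftOfSurjective hφ _ (ψ b') = s.inr.hom b'
    rw [← ha, lift_apply, agree s.inl s.inr s.condition a b' ha]
  · intro s m hm _
    ext b
    obtain ⟨a, rfl⟩ := hφ b
    exact congr($(hm).hom a).trans (lift_apply s.inl _ a).symm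

open AlgebraicGeometry CategoryTheory in
/-- If `φ : A → B` is surjective and `ψ : B' → B` is finite, then the square of schemes
`Spec B → Spec A`, `Spec B → Spec B'`, `Spec A → Spec A'`, `Spec B' → Spec A'`,
where `A' = A ×_B B'`, is a pullback square in the category of schemes: `Spec B` is
the fiber product `Spec A ×_{Spec A'} Spec B'`. -/
theorem spec_fiberProduct_isPullback {A B B' : Type u} [CommRing A] [CommRing B] [CommRing B']
    (φ : A →+* B) (ψ : B' →+* B) (hφ : Function.Surjective φ) (hψ : ψ.Finite) :
    IsPullback
      (Spec.map (CommRingCat.ofHom φ))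
      (Spec.map (CommRingCat.ofHom ψ))
      (Spec.map (CommRingCat.ofHom (fstProj φ ψ)))
      (Spec.map (CommRingCat.ofHom (sndProj φ ψ))) := by
  exact isPullback_SpecMap_of_isPushout _ _ _ _ (fiberProduct_isPushout φ ψ hφ)
end
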